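/- Let U : ℝ² → ℝ be a smooth, nowhere-vanishing function of (z,τ), and let Λ ∈ ℝ with Λ ≠ 0. Define the 2×2 matrix-valued functions B = [[−1, Λ/U],[Λ/U, 1]] and C = [[4ΛU, U·U_zz + U_z² − 2U·U_z − 4Λ²],[U·U_zz + U_z² + 2U·U_z − 4Λ², −4ΛU]]. Then the zero-curvature condition B_τ − (ΛC)_z + B·(ΛC) − (ΛC)·B = 0 holds identically on ℝ² if and only if U satisfies the RmKdV equation U_τ + (U³(U_zz − U))_z = 0 on ℝ². -/

import Mathlib

noncomputable section

/-- Partial derivative of `f` with respect to its first argument. -/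
def d1 (f : ℝ → ℝ → ℝ) : ℝ → ℝ → ℝ := fun a b => deriv (fun a' => f a' b) a

/-- Partial derivative of `f` with respect to its second argument. -/
def d2 (f : ℝ → ℝ → ℝ) : ℝ → ℝ → ℝ := fun a b => deriv (fun b' => f a b') b

/-- Entrywise partial derivative of a matrix-valued function w.r.t. the first argument. -/
def dmat1 (A : ℝ → ℝ → Matrix (Fin 2) (Fin 2) ℝ) : ℝ → ℝ → Matrix (Fin 2) (Fin 2) ℝ :=
  fun a b => Matrix.of fun i j => deriv (fun a' => A a' b i j) a

/-- Entrywise partial derivative of a matrix-valued function w.r.t. the second argument. -/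
def dmat2 (A : ℝ → ℝ → Matrix (Fin 2) (Fin 2) ℝ) : ℝ → ℝ → Matrix (Fin 2) (Fin 2) ℝ :=
  fun a b => Matrix.of fun i j => deriv (fun b' => A a b' i j) b

/-- Smoothness of a two-variable real function. -/
def Smooth2 (f : ℝ → ℝ → ℝ) : Prop := ContDiff ℝ (⊤ : ℕ∞) (fun p : ℝ × ℝ => f p.1 p.2)

/-- The matrix `B` of the RmKdV Lax pair. -/
def BMat (U : ℝ → ℝ → ℝ) (Λ : ℝ) : ℝ → ℝ → Matrix (Fin 2) (Fin 2) ℝ :=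
  fun z τ => !![-1, Λ / U z τ; Λ / U z τ, 1]

/-- The matrix `C` of the RmKdV Lax pair. -/
def CMat (U : ℝ → ℝ → ℝ) (Λ : ℝ) : ℝ → ℝ → Matrix (Fin 2) (Fin 2) ℝ :=
  fun z τ =>
    !![4 * Λ * U z τ,
        U z τ * d1 (d1 U) z τ + (d1 U z τ) ^ 2 - 2 * U z τ * d1 U z τ - 4 * Λ ^ 2;
      U z τ * d1 (d1 U) z τ + (d1 U z τ) ^ 2 + 2 * U z τ * d1 U z τ - 4 * Λ ^ 2,
        -(4 * Λ * U z τ)]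

/-!
Write the off-diagonal entries of `C` as `k ∓ m - 4Λ²`, where `k = (U U_z)_z` and `m = (U²)_z`, so
that `m_z = 2k`. In `[B, C] - C_z` the diagonal cancels, and so do the powers of `Λ` off the
diagonal, because the diagonal of `C` is a multiple of `U` and the off-diagonal of `B` a multiple of
`1 / U`. What is left is `-(k_z - 2m)` times the swap matrix, and
`U² (k_z - 2m) = (U³ (U_zz - U))_z`. Since `B_τ` is `-Λ U_τ / U²` times the swap matrix, the
curvature is `-Λ / U²` times the left-hand side of RmKdV, times the swap matrix.
-/

/-- The curvature `P_τ - Q_z + [P, Q]` of the linear system `Ψ_z = P Ψ`, `Ψ_τ = Q Ψ`, as a function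
of `(z, τ)`. -/
def curvature (P Q : ℝ → ℝ → Matrix (Fin 2) (Fin 2) ℝ) : ℝ → ℝ → Matrix (Fin 2) (Fin 2) ℝ :=
  fun z τ => dmat2 P z τ - dmat1 Q z τ + P z τ * Q z τ - Q z τ * P z τ

/-- The left-hand side `U_τ + (U³ (U_zz - U))_z` of the RmKdV equation. -/
def rmkdvLHS (U : ℝ → ℝ → ℝ) : ℝ → ℝ → ℝ :=
  fun z τ => d2 U z τ + d1 (fun z τ => (U z τ) ^ 3 * (d1 (d1 U) z τ - U z τ)) z τ

section PartialDerivatives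

variable {f : ℝ → ℝ → ℝ} {z τ : ℝ}

theorem hasDerivAt_d1 (hf : DifferentiableAt ℝ (fun x => f x τ) z) :
    HasDerivAt (fun x => f x τ) (d1 f z τ) z :=
  hf.hasDerivAt

theorem hasDerivAt_d2 (hf : DifferentiableAt ℝ (f z) τ) : HasDerivAt (f z) (d2 f z τ) τ :=
  hf.hasDerivAt

theorem Smooth2.differentiableAt_left (hf : Smooth2 f) (z τ : ℝ) :
    DifferentiableAt ℝ (fun x => f x τ) z :=
  (hf.comp (contDiff_id.prodMk contDiff_const)).differentiable (by simp) z

theorem Smooth2.differentiableAt_right (hf : Smooth2 f) (z τ : ℝ) :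
    DifferentiableAt ℝ (f z) τ :=
  (hf.comp (contDiff_const.prodMk contDiff_id)).differentiable (by simp) τ

protected theorem Smooth2.d1 (hf : Smooth2 f) : Smooth2 (d1 f) :=
  have hf' : ContDiff ℝ (⊤ : ℕ∞) (Function.uncurry fun (p : ℝ × ℝ) x => f x p.2) :=
    hf.comp (contDiff_snd.prodMk (contDiff_snd.comp contDiff_fst))
  (hf'.fderiv contDiff_fst (by simp)).clm_apply contDiff_const

theorem dmat1_fin_two (a b c d : ℝ → ℝ → ℝ) (z τ : ℝ) :
    dmat1 (fun z τ => !![a z τ, b z τ; c z τ, d z τ]) z τ =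
      !![d1 a z τ, d1 b z τ; d1 c z τ, d1 d z τ] := by
  ext i j
  fin_cases i <;> fin_cases j <;> rfl

theorem dmat2_fin_two (a b c d : ℝ → ℝ → ℝ) (z τ : ℝ) :
    dmat2 (fun z τ => !![a z τ, b z τ; c z τ, d z τ]) z τ =
      !![d2 a z τ, d2 b z τ; d2 c z τ, d2 d z τ] := by
  ext i j
  fin_cases i <;> fin_cases j <;> rfl

theorem dmat1_const_smul (r : ℝ) (A : ℝ → ℝ → Matrix (Fin 2) (Fin 2) ℝ) (z τ : ℝ) :
    dmat1 (fun z τ => r • A z τ) z τ = r • dmat1 A z τ := by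
  ext i j
  exact deriv_const_mul_field r

end PartialDerivatives

section LaxPair

variable {U : ℝ → ℝ → ℝ} {z τ : ℝ}

theorem rmkdvLHS_eq (h₀ : DifferentiableAt ℝ (fun x => U x τ) z)
    (h₂ : DifferentiableAt ℝ (fun x => d1 (d1 U) x τ) z) :
    rmkdvLHS U z τ = d2 U z τ + U z τ ^ 2 *
      (U z τ * d1 (d1 (d1 U)) z τ + 3 * d1 U z τ * d1 (d1 U) z τ - 4 * U z τ * d1 U z τ) := by
  have hU := hasDerivAt_d1 h₀
  have hflux := (hU.fun_pow 3).fun_mul ((hasDerivAt_d1 h₂).fun_sub hU)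
  rw [rmkdvLHS, d1, hflux.deriv]
  push_cast
  ring

theorem dmat2_BMat (Λ : ℝ) (hτ : DifferentiableAt ℝ (U z) τ) (hne : U z τ ≠ 0) :
    dmat2 (BMat U Λ) z τ = -(Λ * d2 U z τ / U z τ ^ 2) • !![0, 1; 1, 0] := by
  have hoff : d2 (fun z τ => Λ / U z τ) z τ = -(Λ * d2 U z τ / U z τ ^ 2) := by
    rw [d2, ((hasDerivAt_const τ Λ).fun_div (hasDerivAt_d2 hτ) hne).deriv]
    ring
  have hconst (r : ℝ) : d2 (fun _ _ => r) z τ = 0 := deriv_const τ r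
  unfold BMat
  rw [dmat2_fin_two, hoff, hconst, hconst]
  simp

theorem dmat1_CMat (Λ : ℝ) (h₀ : DifferentiableAt ℝ (fun x => U x τ) z)
    (h₁ : DifferentiableAt ℝ (fun x => d1 U x τ) z)
    (h₂ : DifferentiableAt ℝ (fun x => d1 (d1 U) x τ) z) :
    dmat1 (CMat U Λ) z τ =
      !![4 * Λ * d1 U z τ,
          (U z τ * d1 (d1 (d1 U)) z τ + 3 * d1 U z τ * d1 (d1 U) z τ)
            - 2 * (U z τ * d1 (d1 U) z τ + d1 U z τ ^ 2);
        (U z τ * d1 (d1 (d1 U)) z τ + 3 * d1 U z τ * d1 (d1 U) z τ)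
            + 2 * (U z τ * d1 (d1 U) z τ + d1 U z τ ^ 2),
          -(4 * Λ * d1 U z τ)] := by
  have hU := hasDerivAt_d1 h₀
  have hUz := hasDerivAt_d1 h₁
  have hdiag := hU.const_mul (4 * Λ)
  have hk : HasDerivAt (fun x => U x τ * d1 (d1 U) x τ + d1 U x τ ^ 2)
      (U z τ * d1 (d1 (d1 U)) z τ + 3 * d1 U z τ * d1 (d1 U) z τ) z := by
    refine ((hU.fun_mul (hasDerivAt_d1 h₂)).fun_add (hUz.fun_pow 2)).congr_deriv ?_
    push_cast
    ring
  have hm : HasDerivAt (fun x => 2 * U x τ * d1 U x τ)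
      (2 * (U z τ * d1 (d1 U) z τ + d1 U z τ ^ 2)) z := by
    refine ((hU.const_mul 2).fun_mul hUz).congr_deriv ?_
    ring
  unfold CMat
  rw [dmat1_fin_two]
  congrm !![?_, ?_; ?_, ?_]
  · exact hdiag.deriv
  · exact ((hk.fun_sub hm).sub_const (4 * Λ ^ 2)).deriv
  · exact ((hk.fun_add hm).sub_const (4 * Λ ^ 2)).deriv
  · exact hdiag.fun_neg.deriv

theorem commutator_BMat_CMat (Λ : ℝ) (hne : U z τ ≠ 0) :
    BMat U Λ z τ * CMat U Λ z τ - CMat U Λ z τ * BMat U Λ z τ =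
      !![4 * Λ * d1 U z τ,
          -(2 * (U z τ * d1 (d1 U) z τ + d1 U z τ ^ 2)) + 4 * U z τ * d1 U z τ;
        2 * (U z τ * d1 (d1 U) z τ + d1 U z τ ^ 2) + 4 * U z τ * d1 U z τ,
          -(4 * Λ * d1 U z τ)] := by
  simp only [BMat, CMat, Matrix.mul_fin_two, Matrix.of_sub_of, Matrix.sub_cons, Matrix.head_cons,
    Matrix.tail_cons, Matrix.empty_sub_empty]
  congrm !![?_, ?_; ?_, ?_] <;> field_simp <;> ring

theorem commutator_BMat_CMat_sub_dmat1 (Λ : ℝ) (h₀ : DifferentiableAt ℝ (fun x => U x τ) z)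
    (h₁ : DifferentiableAt ℝ (fun x => d1 U x τ) z)
    (h₂ : DifferentiableAt ℝ (fun x => d1 (d1 U) x τ) z) (hne : U z τ ≠ 0) :
    BMat U Λ z τ * CMat U Λ z τ - CMat U Λ z τ * BMat U Λ z τ - dmat1 (CMat U Λ) z τ =
      -(U z τ * d1 (d1 (d1 U)) z τ + 3 * d1 U z τ * d1 (d1 U) z τ - 4 * U z τ * d1 U z τ) •
        !![0, 1; 1, 0] := by
  rw [commutator_BMat_CMat Λ hne, dmat1_CMat Λ h₀ h₁ h₂]
  simp only [Matrix.of_sub_of, Matrix.cons_sub_cons, Matrix.empty_sub_empty, Matrix.smul_of,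
    Matrix.smul_cons, Matrix.smul_empty, smul_eq_mul]
  congrm !![?_, ?_; ?_, ?_] <;> ring

theorem curvature_BMat_smul_CMat (Λ : ℝ) (h₀ : DifferentiableAt ℝ (fun x => U x τ) z)
    (h₁ : DifferentiableAt ℝ (fun x => d1 U x τ) z)
    (h₂ : DifferentiableAt ℝ (fun x => d1 (d1 U) x τ) z)
    (hτ : DifferentiableAt ℝ (U z) τ) (hne : U z τ ≠ 0) :
    curvature (BMat U Λ) (fun z τ => Λ • CMat U Λ z τ) z τ =
      (-(Λ / U z τ ^ 2) * rmkdvLHS U z τ) • !![0, 1; 1, 0] :=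
  calc curvature (BMat U Λ) (fun z τ => Λ • CMat U Λ z τ) z τ
      = dmat2 (BMat U Λ) z τ + Λ • (BMat U Λ z τ * CMat U Λ z τ
          - CMat U Λ z τ * BMat U Λ z τ - dmat1 (CMat U Λ) z τ) := by
        rw [curvature, dmat1_const_smul, mul_smul_comm, smul_mul_assoc]
        module
    _ = (-(Λ / U z τ ^ 2) * rmkdvLHS U z τ) • !![0, 1; 1, 0] := by
        rw [dmat2_BMat Λ hτ hne, commutator_BMat_CMat_sub_dmat1 Λ h₀ h₁ h₂ hne, rmkdvLHS_eq h₀ h₂,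
          smul_smul, ← add_smul]
        congr 1
        field_simp
        ring

end LaxPair

theorem RmKdV_zero_curvature_iff_general {U : ℝ → ℝ → ℝ} {Λ z τ : ℝ}
    (h₀ : DifferentiableAt ℝ (fun x => U x τ) z)
    (h₁ : DifferentiableAt ℝ (fun x => d1 U x τ) z)
    (h₂ : DifferentiableAt ℝ (fun x => d1 (d1 U) x τ) z)
    (hτ : DifferentiableAt ℝ (U z) τ) (hne : U z τ ≠ 0) (hΛ : Λ ≠ 0) :
    curvature (BMat U Λ) (fun z τ => Λ • CMat U Λ z τ) z τ = 0 ↔ rmkdvLHS U z τ = 0 := by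
  have hfactor : -(Λ / U z τ ^ 2) ≠ 0 := neg_ne_zero.2 (div_ne_zero hΛ (pow_ne_zero 2 hne))
  have hswap : !![(0 : ℝ), 1; 1, 0] ≠ 0 := fun h => by simpa using congr_fun₂ h 0 1
  rw [curvature_BMat_smul_CMat Λ h₀ h₁ h₂ hτ hne, smul_eq_zero_iff_left hswap,
    mul_eq_zero_iff_left hfactor]

/-- the zero-curvature condition `B_τ − (ΛC)_z + [B, ΛC] = 0` holds
identically iff `U` solves RmKdV. -/
theorem RmKdV_zero_curvature_iff (U : ℝ → ℝ → ℝ) (Λ : ℝ)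
    (hU : Smooth2 U) (hne : ∀ z τ, U z τ ≠ 0) (hΛ : Λ ≠ 0) :
    (∀ z τ,
      dmat2 (BMat U Λ) z τ - dmat1 (fun z τ => Λ • CMat U Λ z τ) z τ
        + BMat U Λ z τ * (Λ • CMat U Λ z τ)
        - (Λ • CMat U Λ z τ) * BMat U Λ z τ = 0)
    ↔ (∀ z τ, d2 U z τ
        + d1 (fun z τ => (U z τ) ^ 3 * (d1 (d1 U) z τ - U z τ)) z τ = 0) :=
  forall₂_congr fun z τ => RmKdV_zero_curvature_iff_general (hU.differentiableAt_left z τ)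
    (hU.d1.differentiableAt_left z τ) (hU.d1.d1.differentiableAt_left z τ)
    (hU.differentiableAt_right z τ) (hne z τ) hΛ
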